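/- Let H be a simple r-uniform r-partite hypergraph and I = I(H) its edge ideal. Then the Waldschmidt constant of I equals r, i.e., lim_{m→∞} α(I^(m))/m = r, where α(J) denotes the least degree of a nonzero element of J. -/

import Mathlib

/-
The nonisolated vertices of a part of an `r`-partite hypergraph form a minimal vertex cover `C`, so
they generate an associated prime of `I`. Localizing there shows that an element of `I^(m)` has
order at least `m` along the coordinate subspace cut out by `C`. The `r` parts are disjoint, so
these orders add up to at most the degree, whence `α(I^(m)) ≥ r m`; the `m`-th power of the
monomial of an edge attains the bound.
-/

open MvPolynomial

noncomputable def symbolicPower {R : Type*} [CommRing R] (I : Ideal R) (n : ℕ) : Ideal R :=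
  sInf { J : Ideal R | ∃ (p : Ideal R) (hp : p.IsPrime),
    p ∈ associatedPrimes R (R ⧸ I) ∧
    J = Ideal.comap (algebraMap R (Localization (@Ideal.primeCompl R _ p hp)))
        (Ideal.map (algebraMap R (Localization (@Ideal.primeCompl R _ p hp))) (I ^ n)) }

noncomputable def edgeIdeal (k : Type*) {V : Type*} [CommRing k] [DecidableEq V]
    (E : Finset (Finset V)) : Ideal (MvPolynomial V k) :=
  Ideal.span ((fun e : Finset V => ∏ x ∈ e, (X x : MvPolynomial V k)) '' ↑E)

/-- least degree of a nonzero element of an ideal of polynomials -/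
noncomputable def alphaIdeal {k V : Type*} [CommRing k] (J : Ideal (MvPolynomial V k)) : ℕ :=
  sInf { d : ℕ | ∃ f ∈ J, f ≠ 0 ∧ f.totalDegree = d }

/-- The order of a polynomial along the coordinate subspace where the variables in `C` vanish:
the least degree in these variables of a monomial that occurs, and `⊤` for the zero polynomial. -/
noncomputable def orderAlong {k V : Type*} [CommRing k] (C : Set V) (f : MvPolynomial V k) : ℕ∞ :=
  (f : MvPowerSeries V k).weightedOrder (C.indicator 1)

/-- Vertex covers (transversals) of the hypergraph with edge set `E`. Minimal vertex covers are
expressed as `Minimal (IsVertexCover E) C`. -/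
def IsVertexCover {V : Type*} (E : Finset (Finset V)) (C : Set V) : Prop :=
  ∀ e ∈ E, ∃ v ∈ e, v ∈ C

section CommRing

variable {R : Type*} [CommRing R]

theorem mem_symbolicPower_iff {I : Ideal R} {n : ℕ} {f : R} :
    f ∈ symbolicPower I n ↔ ∀ p ∈ associatedPrimes R (R ⧸ I), ∃ s ∉ p, s * f ∈ I ^ n := by
  have mem_comap_iff (p : Ideal R) (hp : p.IsPrime) :
      f ∈ ((I ^ n).map (algebraMap R (Localization p.primeCompl))).comap
        (algebraMap R (Localization p.primeCompl)) ↔ ∃ s ∉ p, s * f ∈ I ^ n := by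
    rw [Ideal.mem_comap, IsLocalization.algebraMap_mem_map_algebraMap_iff p.primeCompl]
    rfl
  rw [symbolicPower, Submodule.mem_sInf]
  constructor
  · intro h p hp
    exact (mem_comap_iff p hp.isPrime).mp (h _ ⟨p, hp.isPrime, hp, rfl⟩)
  · rintro h _ ⟨p, hprime, hp, rfl⟩
    exact (mem_comap_iff p hprime).mpr (h p hp)

theorem pow_le_symbolicPower (I : Ideal R) (n : ℕ) : I ^ n ≤ symbolicPower I n := fun f hf =>
  mem_symbolicPower_iff.mpr fun p hp =>
    ⟨1, p.ne_top_iff_one.mp hp.isPrime.ne_top, by rwa [one_mul]⟩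

theorem mem_associatedPrimes_quotient_of_le_colon {I p : Ideal R} (hp : p.IsPrime) (hIp : I ≤ p)
    {x : R} (hx : x ∉ p) (hcolon : p ≤ Submodule.colon I {x}) :
    p ∈ associatedPrimes R (R ⧸ I) := by
  have colon_eq : Submodule.colon (⊥ : Submodule R (R ⧸ I)) {Ideal.Quotient.mk I x} = p := by
    ext y
    rw [Submodule.mem_colon_singleton, Submodule.mem_bot, Algebra.smul_def,
      Ideal.Quotient.algebraMap_eq, ← map_mul, Ideal.Quotient.eq_zero_iff_mem]
    exact ⟨fun hy => (hp.mem_or_mem (hIp hy)).resolve_right hx,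
      fun hy => Submodule.mem_colon_singleton.mp (hcolon hy)⟩
  exact ⟨hp, _, by rw [colon_eq, hp.radical]⟩

end CommRing

section OrderAlong

variable {k V : Type*} [CommRing k] {C : Set V} {f g : MvPolynomial V k}

theorem orderAlong_le_weight {d : V →₀ ℕ} (hd : d ∈ f.support) :
    orderAlong C f ≤ Finsupp.weight (C.indicator 1 : V → ℕ) d :=
  MvPowerSeries.weightedOrder_le _ (by simpa using hd)

theorem le_orderAlong_iff {n : ℕ} :
    (n : ℕ∞) ≤ orderAlong C f ↔ ∀ d ∈ f.support, n ≤ Finsupp.weight (C.indicator 1) d := by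
  refine ⟨fun h d hd => by exact_mod_cast h.trans (orderAlong_le_weight hd), fun h => ?_⟩
  refine MvPowerSeries.nat_le_weightedOrder _ fun d hd => ?_
  by_contra hne
  exact (h d (by simpa using hne)).not_gt hd

theorem min_orderAlong_le_orderAlong_add :
    min (orderAlong C f) (orderAlong C g) ≤ orderAlong C (f + g) := by
  simpa [orderAlong] using MvPowerSeries.min_weightedOrder_le_add (C.indicator 1)
    (f := (f : MvPowerSeries V k)) (g := (g : MvPowerSeries V k))

theorem orderAlong_mul [NoZeroDivisors k] (C : Set V) (f g : MvPolynomial V k) :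
    orderAlong C (f * g) = orderAlong C f + orderAlong C g := by
  simp [orderAlong, MvPowerSeries.weightedOrder_mul]

theorem mem_span_X_image_iff_orderAlong_ne_zero :
    f ∈ Ideal.span (X '' C : Set (MvPolynomial V k)) ↔ orderAlong C f ≠ 0 := by
  have one_le_weight_iff (d : V →₀ ℕ) :
      1 ≤ Finsupp.weight (C.indicator 1 : V → ℕ) d ↔ ∃ v ∈ C, d v ≠ 0 := by
    simp only [Nat.one_le_iff_ne_zero, Finsupp.weight_apply, Finsupp.sum, smul_eq_mul, ne_eq,
      Finset.sum_eq_zero_iff, Finsupp.mem_support_iff, mul_eq_zero, Set.indicator_apply_eq_zero,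
      Pi.one_apply, one_ne_zero, imp_false]
    grind
  rw [← Order.one_le_iff_ne_zero, ← Nat.cast_one, le_orderAlong_iff, mem_ideal_span_X_image]
  simp only [one_le_weight_iff]

theorem le_orderAlong_of_mem_span_X_image_pow [NoZeroDivisors k] {n : ℕ}
    (hf : f ∈ Ideal.span (X '' C : Set (MvPolynomial V k)) ^ n) : (n : ℕ∞) ≤ orderAlong C f := by
  induction n generalizing f with
  | zero => simp
  | succ n ih =>
    rw [pow_succ] at hf
    induction hf using Submodule.mul_induction_on' with
    | mem_mul_mem a ha b hb =>
      rw [orderAlong_mul, Nat.cast_succ]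
      exact add_le_add (ih ha) <|
        Order.one_le_iff_ne_zero.mpr (mem_span_X_image_iff_orderAlong_ne_zero.mp hb)
    | add a _ b _ ha hb => exact (le_min ha hb).trans min_orderAlong_le_orderAlong_add

theorem isPrime_span_X_image [IsDomain k] (C : Set V) :
    (Ideal.span (X '' C : Set (MvPolynomial V k))).IsPrime := by
  refine ⟨(Ideal.ne_top_iff_one _).mpr ?_, fun {f g} hfg => ?_⟩
  · simp [mem_span_X_image_iff_orderAlong_ne_zero, orderAlong, MvPowerSeries.weightedOrder_one]
  · simp only [mem_span_X_image_iff_orderAlong_ne_zero, orderAlong_mul] at hfg ⊢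
    contrapose! hfg
    rw [hfg.1, hfg.2, add_zero]

theorem X_mem_span_X_image_iff [Nontrivial k] {v : V} :
    (X v : MvPolynomial V k) ∈ Ideal.span (X '' C) ↔ v ∈ C := by
  classical simp [mem_ideal_span_X_image, support_X, Finsupp.single_apply]

theorem sum_weight_indicator_le_degree {ι : Type*} [Fintype ι] {C : ι → Set V}
    (hdisj : Pairwise fun i j => Disjoint (C i) (C j)) (d : V →₀ ℕ) :
    ∑ i, Finsupp.weight ((C i).indicator 1 : V → ℕ) d ≤ d.degree := by
  classical
  have sum_indicator_le_one (v : V) : ∑ i, (C i).indicator (1 : V → ℕ) v ≤ 1 := by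
    rw [← Finset.indicator_biUnion_apply _ _ fun i _ j _ hij => hdisj hij]
    exact Set.indicator_le_self' (by simp) v
  simp only [Finsupp.weight_apply, Finsupp.sum, smul_eq_mul, Finsupp.degree_apply]
  rw [Finset.sum_comm]
  refine Finset.sum_le_sum fun v _ => ?_
  rw [← Finset.mul_sum]
  exact mul_le_of_le_one_right' (sum_indicator_le_one v)

theorem sum_orderAlong_le_totalDegree {ι : Type*} [Fintype ι] {C : ι → Set V}
    (hdisj : Pairwise fun i j => Disjoint (C i) (C j)) (hf : f ≠ 0) :
    ∑ i, orderAlong (C i) f ≤ f.totalDegree := by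
  obtain ⟨d, hd⟩ := support_nonempty.mpr hf
  calc ∑ i, orderAlong (C i) f
      ≤ ∑ i, (Finsupp.weight ((C i).indicator 1 : V → ℕ) d : ℕ∞) :=
        Finset.sum_le_sum fun i _ => orderAlong_le_weight hd
    _ ≤ f.totalDegree := by
        exact_mod_cast (sum_weight_indicator_le_degree hdisj d).trans (le_totalDegree hd)

end OrderAlong

section SquarefreeMonomial

variable {k V : Type*} [CommRing k] [IsDomain k]

theorem prod_X_pow_ne_zero (e : Finset V) (m : ℕ) :
    (∏ v ∈ e, (X v : MvPolynomial V k)) ^ m ≠ 0 :=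
  pow_ne_zero _ (Finset.prod_ne_zero_iff.mpr fun v _ => X_ne_zero v)

theorem totalDegree_prod_X_pow (e : Finset V) (m : ℕ) :
    ((∏ v ∈ e, (X v : MvPolynomial V k)) ^ m).totalDegree = e.card * m := by
  have hhom : (∏ v ∈ e, (X v : MvPolynomial V k)).IsHomogeneous (∑ _v ∈ e, 1) :=
    IsHomogeneous.prod _ _ _ fun v _ => isHomogeneous_X k v
  rw [(hhom.pow m).totalDegree (prod_X_pow_ne_zero e m), Finset.card_eq_sum_ones]

end SquarefreeMonomial

section VertexCover

variable {V : Type*} {E : Finset (Finset V)} {C : Set V}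

theorem exists_edge_inter_eq_singleton_of_minimal (hC : Minimal (IsVertexCover E) C) {v : V}
    (hv : v ∈ C) : ∃ e ∈ E, (e ∩ C : Set V) = {v} := by
  have hnot : ¬ IsVertexCover E (C \ {v}) := fun h =>
    hC.notMem_of_prop_sdiff_singleton h hv
  simp only [IsVertexCover, not_forall, not_exists] at hnot
  obtain ⟨e, he, hev⟩ := hnot
  have subset_singleton : (e ∩ C : Set V) ⊆ {v} := fun w hw => by
    by_contra hwv
    exact hev w ⟨hw.1, hw.2, hwv⟩
  obtain ⟨w, hwe, hwC⟩ := hC.prop e he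
  exact ⟨e, he, (Set.subset_singleton_iff_eq.mp subset_singleton).resolve_left
    (Set.Nonempty.ne_empty ⟨w, hwe, hwC⟩)⟩

theorem minimal_isVertexCover_of_existsUnique {A : Set V} (hA : ∀ e ∈ E, ∃! v, v ∈ e ∧ v ∈ A) :
    Minimal (IsVertexCover E) {v ∈ A | ∃ e ∈ E, v ∈ e} := by
  refine ⟨fun e he => ?_, fun D hD hDA v ⟨hvA, e, he, hve⟩ => ?_⟩
  · obtain ⟨v, ⟨hve, hvA⟩, -⟩ := hA e he
    exact ⟨v, hve, hvA, e, he, hve⟩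
  · obtain ⟨w, hwe, hwD⟩ := hD e he
    rwa [(hA e he).unique ⟨hve, hvA⟩ ⟨hwe, (hDA hwD).1⟩]

end VertexCover

section EdgeIdeal

variable {k V : Type*} [CommRing k] [DecidableEq V] {E : Finset (Finset V)} {C : Set V}

theorem prod_X_mem_edgeIdeal {e : Finset V} (he : e ∈ E) :
    ∏ v ∈ e, (X v : MvPolynomial V k) ∈ edgeIdeal k E :=
  Ideal.subset_span ⟨e, he, rfl⟩

theorem edgeIdeal_le_span_X_image (hC : IsVertexCover E C) :
    edgeIdeal k E ≤ Ideal.span (X '' C) := by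
  rw [edgeIdeal, Ideal.span_le]
  rintro _ ⟨e, he, rfl⟩
  obtain ⟨v, hve, hvC⟩ := hC e he
  exact Ideal.mem_of_dvd _ (Finset.dvd_prod_of_mem _ hve) (Ideal.subset_span ⟨v, hvC, rfl⟩)

theorem span_X_image_mem_associatedPrimes_edgeIdeal [IsDomain k]
    (hC : Minimal (IsVertexCover E) C) :
    Ideal.span (X '' C) ∈
      associatedPrimes (MvPolynomial V k) (MvPolynomial V k ⧸ edgeIdeal k E) := by
  classical
  have hprime := isPrime_span_X_image (k := k) C
  -- By minimality, each `v ∈ C` lies in an edge whose other vertices are all in `W`, so `X v` kills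
  -- the product of `W` modulo the edge ideal.
  let W : Finset V := {w ∈ E.biUnion id | w ∉ C}
  refine mem_associatedPrimes_quotient_of_le_colon hprime (edgeIdeal_le_span_X_image hC.prop)
    (x := ∏ w ∈ W, X w) (fun hW => ?_) (Ideal.span_le.mpr ?_)
  · obtain ⟨w, hwW, hw⟩ := hprime.prod_mem_iff.mp hW
    exact (Finset.mem_filter.mp hwW).2 (X_mem_span_X_image_iff.mp hw)
  · rintro _ ⟨v, hv, rfl⟩
    obtain ⟨e, he, heC⟩ := exists_edge_inter_eq_singleton_of_minimal hC hv
    have hve : v ∈ e := (heC.ge rfl).1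
    have erase_subset : e.erase v ⊆ W := fun w hw => by
      rw [Finset.mem_erase] at hw
      exact Finset.mem_filter.mpr
        ⟨Finset.mem_biUnion.mpr ⟨e, he, hw.2⟩, fun hwC => hw.1 (heC.le ⟨hw.2, hwC⟩)⟩
    rw [SetLike.mem_coe, Submodule.mem_colon_singleton, smul_eq_mul]
    refine Ideal.mem_of_dvd _ ?_ (prod_X_mem_edgeIdeal he)
    rw [← Finset.mul_prod_erase e X hve]
    exact mul_dvd_mul_left _ (Finset.prod_dvd_prod_of_subset _ _ _ erase_subset)

theorem le_orderAlong_of_mem_symbolicPower_edgeIdeal [IsDomain k]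
    (hC : Minimal (IsVertexCover E) C) {m : ℕ} {f : MvPolynomial V k}
    (hf : f ∈ symbolicPower (edgeIdeal k E) m) : (m : ℕ∞) ≤ orderAlong C f := by
  obtain ⟨s, hs, hsf⟩ :=
    mem_symbolicPower_iff.mp hf _ (span_X_image_mem_associatedPrimes_edgeIdeal hC)
  rw [mem_span_X_image_iff_orderAlong_ne_zero, not_not] at hs
  calc (m : ℕ∞) ≤ orderAlong C (s * f) := le_orderAlong_of_mem_span_X_image_pow <|
        Ideal.pow_right_mono (edgeIdeal_le_span_X_image hC.prop) m hsf
    _ = orderAlong C f := by rw [orderAlong_mul, hs, zero_add]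

theorem card_mul_le_totalDegree_of_mem_symbolicPower_edgeIdeal [IsDomain k] {ι : Type*}
    [Fintype ι] {C : ι → Set V} (hC : ∀ i, Minimal (IsVertexCover E) (C i))
    (hdisj : Pairwise fun i j => Disjoint (C i) (C j)) {m : ℕ} {f : MvPolynomial V k}
    (hf : f ∈ symbolicPower (edgeIdeal k E) m) (hf0 : f ≠ 0) :
    Fintype.card ι * m ≤ f.totalDegree := by
  have hsum : ∑ _i : ι, (m : ℕ∞) ≤ f.totalDegree :=
    (Finset.sum_le_sum fun i _ => le_orderAlong_of_mem_symbolicPower_edgeIdeal (hC i) hf).trans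
      (sum_orderAlong_le_totalDegree hdisj hf0)
  rw [Finset.sum_const, Finset.card_univ, nsmul_eq_mul] at hsum
  exact_mod_cast hsum

theorem alphaIdeal_symbolicPower_edgeIdeal [IsDomain k] {ι : Type*} [Fintype ι] {C : ι → Set V}
    (hC : ∀ i, Minimal (IsVertexCover E) (C i))
    (hdisj : Pairwise fun i j => Disjoint (C i) (C j)) {e : Finset V} (he : e ∈ E)
    (hcard : e.card = Fintype.card ι) (m : ℕ) :
    alphaIdeal (symbolicPower (edgeIdeal k E) m) = Fintype.card ι * m := by
  refine IsLeast.csInf_eq ⟨⟨(∏ v ∈ e, X v) ^ m, ?_, ?_, ?_⟩, ?_⟩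
  · exact pow_le_symbolicPower _ m (Ideal.pow_mem_pow (prod_X_mem_edgeIdeal he) m)
  · exact prod_X_pow_ne_zero e m
  · rw [totalDegree_prod_X_pow, hcard]
  · rintro _ ⟨f, hf, hf0, rfl⟩
    exact card_mul_le_totalDegree_of_mem_symbolicPower_edgeIdeal hC hdisj hf hf0

end EdgeIdeal

theorem stmt1_general {k V : Type*} [CommRing k] [IsDomain k] [DecidableEq V]
    (r : ℕ) (E : Finset (Finset V)) (hE : E.Nonempty)
    (huniform : ∀ e ∈ E, e.card = r)
    (Xp : Fin r → Set V)
    (hdisj : Pairwise fun i j => Disjoint (Xp i) (Xp j))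
    (hpartite : ∀ e ∈ E, ∀ i, ∃! v, v ∈ e ∧ v ∈ Xp i) :
    Filter.Tendsto
      (fun m : ℕ => (alphaIdeal (symbolicPower (edgeIdeal k E) m) : ℝ) / m)
      Filter.atTop (nhds (r : ℝ)) := by
  obtain ⟨e, he⟩ := hE
  have hC (i : Fin r) : Minimal (IsVertexCover E) {v ∈ Xp i | ∃ e ∈ E, v ∈ e} :=
    minimal_isVertexCover_of_existsUnique fun e he => hpartite e he i
  have hdisjC : Pairwise fun i j => Disjoint {v ∈ Xp i | ∃ e ∈ E, v ∈ e}
      {v ∈ Xp j | ∃ e ∈ E, v ∈ e} :=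
    fun i j hij => (hdisj hij).mono (Set.sep_subset _ _) (Set.sep_subset _ _)
  have halpha (m : ℕ) : alphaIdeal (symbolicPower (edgeIdeal k E) m) = r * m := by
    simpa using alphaIdeal_symbolicPower_edgeIdeal (k := k) hC hdisjC he (by simp [huniform e he]) m
  refine tendsto_const_nhds.congr' ?_
  filter_upwards [Filter.eventually_ne_atTop 0] with m hm
  rw [halpha, Nat.cast_mul, mul_div_cancel_right₀ _ (Nat.cast_ne_zero.mpr hm)]

/-- the Waldschmidt constant of the edge ideal of a simple r-uniform
r-partite hypergraph equals r. -/
theorem stmt1 {k V : Type*} [Field k] [Fintype V] [DecidableEq V]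
    (r : ℕ) (hr : 1 ≤ r) (E : Finset (Finset V)) (hE : E.Nonempty)
    (huniform : ∀ e ∈ E, e.card = r)
    (Xp : Fin r → Finset V)
    (hdisj : Pairwise fun i j => Disjoint (Xp i) (Xp j))
    (hcover : ∀ v : V, ∃ i, v ∈ Xp i)
    (hpartite : ∀ e ∈ E, ∀ i, (e ∩ Xp i).card = 1) :
    Filter.Tendsto
      (fun m : ℕ => (alphaIdeal (symbolicPower (edgeIdeal k E) m) : ℝ) / m)
      Filter.atTop (nhds (r : ℝ)) :=
  stmt1_general r E hE huniform (fun i => Xp i) (fun _ _ hij => Finset.disjoint_coe.mpr (hdisj hij))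
    fun e he i => by simpa using Finset.card_eq_one_iff_existsUnique.mp (hpartite e he i)
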